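/- Let N be an odd Niemeier lattice of minimum norm 2 whose two even neighbors have root sublattices isometric to E₈⊕E₈⊕E₈ and D₈⊕D₈⊕D₈ respectively. Then N does not contain a sublattice isometric to L⁺. -/

import Mathlib

open scoped BigOperators

namespace Niemeier

variable {V : Type*} [AddCommGroup V] [Module ℚ V]
variable {W : Type*} [AddCommGroup W] [Module ℚ W]

/-- The dual lattice of a `ℤ`-submodule `L` of a rational vector space `V` with respect to the
bilinear form `B`: all vectors pairing integrally with every element of `L`. -/
def dualLattice (B : V →ₗ[ℚ] V →ₗ[ℚ] ℚ) (L : Submodule ℤ V) : Submodule ℤ V where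
  carrier := {x | ∀ y ∈ L, ∃ n : ℤ, B x y = n}
  zero_mem' := by
    intro y hy
    exact ⟨0, by simp⟩
  add_mem' := by
    intro a b ha hb y hy
    obtain ⟨m, hm⟩ := ha y hy
    obtain ⟨k, hk⟩ := hb y hy
    exact ⟨m + k, by push_cast [map_add, LinearMap.add_apply, hm, hk]; rfl⟩
  smul_mem' := by
    intro c x hx y hy
    obtain ⟨m, hm⟩ := hx y hy
    refine ⟨c * m, ?_⟩
    have h1 : B (c • x) y = c • (B x y) := by
      rw [map_zsmul]; rfl
    rw [h1, hm, zsmul_eq_mul]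
    push_cast
    ring

/-- `B` is a symmetric positive-definite bilinear form. -/
def IsPosDefSymm (B : V →ₗ[ℚ] V →ₗ[ℚ] ℚ) : Prop :=
  (∀ x y, B x y = B y x) ∧ ∀ x : V, x ≠ 0 → 0 < B x x

/-- `L` is a (full-rank, integral) lattice in `V` with respect to `B`. -/
structure IsIntegralLattice (B : V →ₗ[ℚ] V →ₗ[ℚ] ℚ) (L : Submodule ℤ V) : Prop where
  fg : L.FG
  spans : Submodule.span ℚ (L : Set V) = ⊤
  integral : L ≤ dualLattice B L

/-- `L` is unimodular: it coincides with its dual lattice. -/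
def IsUnimodular (B : V →ₗ[ℚ] V →ₗ[ℚ] ℚ) (L : Submodule ℤ V) : Prop :=
  L = dualLattice B L

/-- `L` is an even lattice: all norms are even integers. -/
def IsEvenLat (B : V →ₗ[ℚ] V →ₗ[ℚ] ℚ) (L : Submodule ℤ V) : Prop :=
  ∀ v ∈ L, ∃ n : ℤ, B v v = 2 * n

/-- `L` is an odd lattice: some vector has odd (integer) norm. -/
def IsOddLat (B : V →ₗ[ℚ] V →ₗ[ℚ] ℚ) (L : Submodule ℤ V) : Prop :=
  ∃ v ∈ L, ∃ n : ℤ, B v v = 2 * n + 1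

/-- An odd Niemeier lattice: an odd positive-definite unimodular integral lattice of rank 24
(positive-definiteness of `B` is a separate hypothesis). -/
def IsOddNiemeier (B : V →ₗ[ℚ] V →ₗ[ℚ] ℚ) (N : Submodule ℤ V) : Prop :=
  IsIntegralLattice B N ∧ IsUnimodular B N ∧ IsOddLat B N ∧ Module.finrank ℚ V = 24

/-- `D` is a subgroup of index two in `L`. -/
def IndexTwo (D L : Submodule ℤ V) : Prop :=
  D ≤ L ∧ ∃ a ∈ L, a ∉ D ∧ ∀ x ∈ L, x ∈ D ∨ x - a ∈ D

/-- Two lattices are neighbors if their intersection has index two in each of them. -/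
def Neighbors (L M : Submodule ℤ V) : Prop :=
  IndexTwo (L ⊓ M) L ∧ IndexTwo (L ⊓ M) M

/-- `E` is an even neighbor of the odd Niemeier lattice `N`: an even unimodular integral
lattice (in the same ambient space) which is a neighbor of `N`. -/
def IsEvenNeighbor (B : V →ₗ[ℚ] V →ₗ[ℚ] ℚ) (N E : Submodule ℤ V) : Prop :=
  IsIntegralLattice B E ∧ IsUnimodular B E ∧ IsEvenLat B E ∧ Neighbors N E

/-- The minimum norm of `L` equals `m`. -/
def HasMinNorm (B : V →ₗ[ℚ] V →ₗ[ℚ] ℚ) (L : Submodule ℤ V) (m : ℚ) : Prop :=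
  (∃ v ∈ L, v ≠ 0 ∧ B v v = m) ∧ ∀ v ∈ L, v ≠ 0 → m ≤ B v v

/-- `N` contains a sublattice isometric to the rank-6 lattice `L⁺`, i.e. there are vectors
`h, a 0, …, a 4` in `N` realizing the Gram matrix of `L⁺`. -/
def ContainsLPlus (B : V →ₗ[ℚ] V →ₗ[ℚ] ℚ) (N : Submodule ℤ V) : Prop :=
  ∃ h ∈ N, ∃ a : Fin 5 → V, (∀ i, a i ∈ N) ∧
    B h h = 2 ∧ (∀ i, B h (a i) = 1) ∧ (∀ i, B (a i) (a i) = 3) ∧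
    ∀ i j, i ≠ j → B (a i) (a j) = 0

/-- Two lattices (in possibly different ambient spaces, with forms `B` and `C`) are isometric:
there is a `ℤ`-linear bijection between them preserving the bilinear forms. -/
def LatticeIsometric (B : V → V → ℚ) (C : W → W → ℚ)
    (L : Submodule ℤ V) (M : Submodule ℤ W) : Prop :=
  ∃ f : L ≃ₗ[ℤ] M, ∀ x y : L, C (f x) (f y) = B x y

/-- The standard dot product on `ℚⁿ`. -/
def stdDot (n : ℕ) : (Fin n → ℚ) → (Fin n → ℚ) → ℚ := fun x y => ∑ i, x i * y i

/-- The orthogonal sum of two bilinear forms. -/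
def prodForm (B : V → V → ℚ) (C : W → W → ℚ) : V × W → V × W → ℚ :=
  fun p q => B p.1 q.1 + C p.2 q.2

/-- A vector in `ℚⁿ` has integer coordinates. -/
def IsIntVec {n : ℕ} (x : Fin n → ℚ) : Prop := ∀ i, ∃ m : ℤ, x i = m

/-- The root lattice `Dₙ = {x ∈ ℤⁿ : ∑ xᵢ even}`. -/
def latD (n : ℕ) : Submodule ℤ (Fin n → ℚ) where
  carrier := {x | IsIntVec x ∧ ∃ k : ℤ, ∑ i, x i = 2 * k}
  zero_mem' := by
    refine ⟨fun i => ⟨0, by simp⟩, 0, by simp⟩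
  add_mem' := by
    rintro a b ⟨ha, k₁, hk₁⟩ ⟨hb, k₂, hk₂⟩
    refine ⟨fun i => ?_, k₁ + k₂, ?_⟩
    · obtain ⟨m, hm⟩ := ha i
      obtain ⟨m', hm'⟩ := hb i
      exact ⟨m + m', by simp [Pi.add_apply, hm, hm']⟩
    · simp only [Pi.add_apply, Finset.sum_add_distrib, hk₁, hk₂]
      push_cast
      ring
  smul_mem' := by
    rintro c x ⟨hx, k, hk⟩
    refine ⟨fun i => ?_, c * k, ?_⟩
    · obtain ⟨m, hm⟩ := hx i
      exact ⟨c * m, by simp [Pi.smul_apply, hm, zsmul_eq_mul]⟩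
    · have : ∑ i, (c • x) i = c • ∑ i, x i := by
        simp [Pi.smul_apply, Finset.smul_sum]
      rw [this, hk, zsmul_eq_mul]
      push_cast
      ring

/-- The root lattice `Aₙ = {x ∈ ℤⁿ⁺¹ : ∑ xᵢ = 0}`. -/
def latA (n : ℕ) : Submodule ℤ (Fin (n + 1) → ℚ) where
  carrier := {x | IsIntVec x ∧ ∑ i, x i = 0}
  zero_mem' := ⟨fun i => ⟨0, by simp⟩, by simp⟩
  add_mem' := by
    rintro a b ⟨ha, hka⟩ ⟨hb, hkb⟩
    refine ⟨fun i => ?_, ?_⟩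
    · obtain ⟨m, hm⟩ := ha i
      obtain ⟨m', hm'⟩ := hb i
      exact ⟨m + m', by simp [Pi.add_apply, hm, hm']⟩
    · simp [Pi.add_apply, Finset.sum_add_distrib, hka, hkb]
  smul_mem' := by
    rintro c x ⟨hx, hk⟩
    refine ⟨fun i => ?_, ?_⟩
    · obtain ⟨m, hm⟩ := hx i
      exact ⟨c * m, by simp [Pi.smul_apply, hm, zsmul_eq_mul]⟩
    · have : ∑ i, (c • x) i = c • ∑ i, x i := by
        simp [Pi.smul_apply, Finset.smul_sum]
      rw [this, hk, smul_zero]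

/-- The root lattice `E₈ = D₈ + ℤ·(½,…,½)`. -/
def latE8 : Submodule ℤ (Fin 8 → ℚ) :=
  latD 8 ⊔ Submodule.span ℤ {fun _ => (1 : ℚ) / 2}

/-- The root sublattice of `E`: the `ℤ`-span of its vectors of norm 2. -/
def rootSublattice (B : V →ₗ[ℚ] V →ₗ[ℚ] ℚ) (E : Submodule ℤ V) : Submodule ℤ V :=
  Submodule.span ℤ {v : V | v ∈ E ∧ B v v = 2}

/-- The set of even-norm vectors of `N` (the even sublattice, as a set). -/
def evenSet (B : V →ₗ[ℚ] V →ₗ[ℚ] ℚ) (N : Submodule ℤ V) : Set V :=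
  {x | x ∈ N ∧ ∃ n : ℤ, B x x = 2 * n}

/-- The unordered pair of root sublattices of `E₁` and `E₂` is isometric to the pair
`(M₁, M₂)`. -/
def RootPairIso {W₁ W₂ : Type*} [AddCommGroup W₁] [Module ℚ W₁]
    [AddCommGroup W₂] [Module ℚ W₂]
    (B : V →ₗ[ℚ] V →ₗ[ℚ] ℚ) (E₁ E₂ : Submodule ℤ V)
    (C₁ : W₁ → W₁ → ℚ) (M₁ : Submodule ℤ W₁)
    (C₂ : W₂ → W₂ → ℚ) (M₂ : Submodule ℤ W₂) : Prop :=
  (LatticeIsometric (fun x y => B x y) C₁ (rootSublattice B E₁) M₁ ∧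
    LatticeIsometric (fun x y => B x y) C₂ (rootSublattice B E₂) M₂) ∨
  (LatticeIsometric (fun x y => B x y) C₂ (rootSublattice B E₁) M₂ ∧
    LatticeIsometric (fun x y => B x y) C₁ (rootSublattice B E₂) M₁)

/-- The unordered pair of root sublattices of `E₁`, `E₂` is one of the four exceptional pairs
`{E₈³, D₈³}`, `{D₁₆⊕E₈, A₁₅⊕D₉}`, `{D₁₂², A₁₂²}`, `{D₂₄, A₂₄}`. -/
def IsExceptionalPair (B : V →ₗ[ℚ] V →ₗ[ℚ] ℚ) (E₁ E₂ : Submodule ℤ V) : Prop :=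
  RootPairIso B E₁ E₂
    (prodForm (stdDot 8) (prodForm (stdDot 8) (stdDot 8))) (latE8.prod (latE8.prod latE8))
    (prodForm (stdDot 8) (prodForm (stdDot 8) (stdDot 8))) ((latD 8).prod ((latD 8).prod (latD 8))) ∨
  RootPairIso B E₁ E₂
    (prodForm (stdDot 16) (stdDot 8)) ((latD 16).prod latE8)
    (prodForm (stdDot 16) (stdDot 9)) ((latA 15).prod (latD 9)) ∨
  RootPairIso B E₁ E₂
    (prodForm (stdDot 12) (stdDot 12)) ((latD 12).prod (latD 12))
    (prodForm (stdDot 13) (stdDot 13)) ((latA 12).prod (latA 12)) ∨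
  RootPairIso B E₁ E₂
    (stdDot 24) (latD 24)
    (stdDot 25) (latA 24)

/-!
The splitting of `E₁` as a sum of three copies of `E₈` turns vectors of `N` into triples of blocks
in `ℚ⁸`, and twice a block lies in `E₈`. Suppose some block `u / 2` of a norm-3 vector `v ∈ N` had
norm less than 1, so that `u` is zero or a root. The roots of that block orthogonal to `u` pair to
zero with `v`; as `v` is an odd vector, this forces them into `N`, and being even they lie in `E₂`.
All roots of `E₂` have integer coordinates with respect to `D₈ ⊕ D₈ ⊕ D₈ ⊆ ℤ²⁴`. But the roots of
`E₈` orthogonal to `u` contain a `D₄` diagram, and among three orthogonal legs of such a diagram in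
`ℤⁿ` two have the same odd coordinates, so that their difference `d` pairs evenly with all the
roots orthogonal to `u`. Then `(d - k u) / 2` pairs integrally with all of `E₈` for some integer
`k`, but its norm `1 + k² (u, u) / 4` is never an even integer.

So the three blocks of a norm-3 vector are unit vectors, and pairings between corresponding blocks
of two such vectors are integers. The root `h` of `L⁺` lies in a single block, in which the five
unit vectors coming from `α₁, …, α₅` all pair to 1 with `h`. At most two of them are distinct, so
three coincide, and orthogonality of the corresponding `αᵢ` makes their sum vanish in the other two
blocks. There the unit vectors pair to `-1/2`, which is not an integer.
-/

section Lattices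

variable {B : V →ₗ[ℚ] V →ₗ[ℚ] ℚ} {D L M N E : Submodule ℤ V} {v x y : V}

omit [Module ℚ V] in
lemma IndexTwo.sub_mem (h : IndexTwo D L) (hx : x ∈ L) (hy : y ∈ L) (hxD : x ∉ D)
    (hyD : y ∉ D) : x - y ∈ D := by
  obtain ⟨-, a, -, -, hcover⟩ := h
  simpa using D.sub_mem ((hcover x hx).resolve_left hxD) ((hcover y hy).resolve_left hyD)

omit [Module ℚ V] in
lemma IndexTwo.add_self_mem (h : IndexTwo D L) (hx : x ∈ L) : x + x ∈ D := by
  by_cases hxD : x ∈ D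
  · exact D.add_mem hxD hxD
  · simpa using h.sub_mem hx (L.neg_mem hx) hxD (by rwa [D.neg_mem_iff])

lemma IsPosDefSymm.nonneg (hB : IsPosDefSymm B) (x : V) : 0 ≤ B x x := by
  obtain rfl | hx := eq_or_ne x 0
  · simp
  · exact (hB.2 x hx).le

lemma IsEvenLat.notMem_of_odd (hL : IsEvenLat B L) {n : ℤ} (hv : B v v = 2 * n + 1) :
    v ∉ L := by
  intro hvL
  obtain ⟨m, hm⟩ := hL v hvL
  have : (2 * m : ℤ) = 2 * n + 1 := by exact_mod_cast hm.symm.trans hv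
  omega

lemma IsEvenLat.le_dualLattice (hB : IsPosDefSymm B) (hL : IsEvenLat B L) :
    L ≤ dualLattice B L := by
  intro x hx y hy
  obtain ⟨k, hk⟩ := hL _ (L.add_mem hx hy)
  obtain ⟨m, hm⟩ := hL x hx
  obtain ⟨n, hn⟩ := hL y hy
  refine ⟨k - m - n, ?_⟩
  simp only [map_add, LinearMap.add_apply, hB.1 y x] at hk
  push_cast
  linarith

lemma dualLattice_anti (h : L ≤ M) : dualLattice B M ≤ dualLattice B L :=
  fun _ hx y hy => hx y (h hy)

lemma rootSublattice_le : rootSublattice B L ≤ L :=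
  Submodule.span_le.2 fun _ hx => hx.1

lemma mem_dualLattice_rootSublattice
    (h : ∀ y ∈ L, B y y = 2 → ∃ n : ℤ, B x y = n) : x ∈ dualLattice B (rootSublattice B L) := by
  intro y hy
  induction hy using Submodule.span_induction with
  | mem y hy => exact h y hy.1 hy.2
  | zero => exact ⟨0, by simp⟩
  | add y z _ _ hy hz =>
    obtain ⟨m, hm⟩ := hy
    obtain ⟨n, hn⟩ := hz
    exact ⟨m + n, by simp [hm, hn]⟩
  | smul c y _ hy =>
    obtain ⟨m, hm⟩ := hy
    exact ⟨c * m, by simp [hm, map_zsmul]⟩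

lemma Neighbors.mem_of_even (hNE : Neighbors N E) (hE : IsEvenLat B E)
    (hN : N ≤ dualLattice B N) (hB : IsPosDefSymm B) {m n : ℤ} (hv : v ∈ N)
    (hvv : B v v = 2 * m + 1) (hx : x ∈ N) (hxx : B x x = 2 * n) : x ∈ E := by
  by_contra hxE
  have hsub : v - x ∈ N ⊓ E :=
    hNE.1.sub_mem hv hx (fun h => hE.notMem_of_odd hvv h.2) (fun h => hxE h.2)
  obtain ⟨k, hk⟩ := hN hv x hx
  refine hE.notMem_of_odd (n := m + n - k) ?_ hsub.2
  simp only [map_sub, LinearMap.sub_apply, hB.1 x v, hvv, hxx, hk]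
  push_cast
  ring

lemma Neighbors.mem_of_pairing_int (hNE : Neighbors N E) (hE : dualLattice B E ≤ E)
    (hN : N ≤ dualLattice B N) (hv : v ∈ N) (hvE : v ∉ E) (hx : x ∈ E)
    (hvx : ∃ n : ℤ, B v x = n) : x ∈ N := by
  by_contra hxN
  refine hvE (hE fun y hy => ?_)
  by_cases hyN : y ∈ N
  · exact hN hv y hyN
  · have hsub : y - x ∈ N ⊓ E := hNE.2.sub_mem hy hx (fun h => hyN h.1) (fun h => hxN h.1)
    obtain ⟨m, hm⟩ := hN hv _ hsub.1
    obtain ⟨n, hn⟩ := hvx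
    refine ⟨m + n, ?_⟩
    rw [map_sub] at hm
    push_cast
    linarith

lemma LatticeIsometric.exists_linearMap {C : W →ₗ[ℚ] W →ₗ[ℚ] ℚ} {L : Submodule ℤ W}
    (hB : IsPosDefSymm B) (hL : Submodule.span ℚ (L : Set W) = ⊤)
    (h : LatticeIsometric (fun x y => B x y) (fun x y => C x y) M L) :
    ∃ Ψ : W →ₗ[ℚ] V, (∀ x y, B (Ψ x) (Ψ y) = C x y) ∧ ∀ x ∈ L, Ψ x ∈ M := by
  obtain ⟨f, hf⟩ := h
  let b := Module.Basis.ofSpan hL.ge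
  have hbL : ∀ i, b i ∈ L := fun i => Module.Basis.ofSpan_subset hL.ge ⟨i, rfl⟩
  let Ψ : W →ₗ[ℚ] V := b.constr ℚ fun i => (f.symm ⟨b i, hbL i⟩ : V)
  have hΨb : ∀ i, Ψ (b i) = f.symm ⟨b i, hbL i⟩ := fun i => b.constr_basis ℚ _ i
  have hf' : ∀ x y : L, B (f.symm x) (f.symm y) = C x y := fun x y => by
    simpa using (hf (f.symm x) (f.symm y)).symm
  have hΨ : B.compl₁₂ Ψ Ψ = C := LinearMap.ext_basis b b fun i j => by
    simpa [hΨb] using hf' ⟨b i, hbL i⟩ ⟨b j, hbL j⟩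
  have hcross : ∀ x : L, B (f.symm x) ∘ₗ Ψ = C x := fun x => b.ext fun i => by
    simpa [hΨb] using hf' x ⟨b i, hbL i⟩
  have hΨ_apply : ∀ x y, B (Ψ x) (Ψ y) = C x y := fun x y => by
    rw [← hΨ, LinearMap.compl₁₂_apply]
  refine ⟨Ψ, hΨ_apply, fun x hx => ?_⟩
  suffices hΨL : Ψ x = f.symm ⟨x, hx⟩ from hΨL ▸ (f.symm _).2
  have hx' : B (f.symm ⟨x, hx⟩) (Ψ x) = C x x := LinearMap.congr_fun (hcross ⟨x, hx⟩) x
  by_contra hne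
  refine (hB.2 _ (sub_ne_zero.2 hne)).ne' ?_
  simp only [map_sub, LinearMap.sub_apply, hΨ_apply, hx', hf', hB.1 (Ψ x) (f.symm _)]
  ring

lemma LatticeIsometric.exists_linearEquiv [FiniteDimensional ℚ V] {C : W →ₗ[ℚ] W →ₗ[ℚ] ℚ}
    {L : Submodule ℤ W} (hB : IsPosDefSymm B) (hC : IsPosDefSymm C)
    (hL : Submodule.span ℚ (L : Set W) = ⊤) (hdim : Module.finrank ℚ W = Module.finrank ℚ V)
    (h : LatticeIsometric (fun x y => B x y) (fun x y => C x y) M L) :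
    ∃ Φ : V ≃ₗ[ℚ] W, (∀ x y, C (Φ x) (Φ y) = B x y) ∧ ∀ y ∈ L, Φ.symm y ∈ M := by
  obtain ⟨Ψ, hΨ, hΨL⟩ := h.exists_linearMap hB hL
  have hinj : Function.Injective Ψ := by
    refine (injective_iff_map_eq_zero Ψ).2 fun x hx => ?_
    by_contra hx0
    exact (hC.2 x hx0).ne' (by rw [← hΨ, hx, map_zero])
  let e : W ≃ₗ[ℚ] V := LinearEquiv.ofInjectiveOfFinrankEq Ψ hinj hdim
  have he : ∀ x, e x = Ψ x := fun _ => rfl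
  refine ⟨e.symm, fun x y => ?_, fun y hy => ?_⟩
  · rw [← hΨ, ← he, ← he, e.apply_symm_apply, e.apply_symm_apply]
  · rw [e.symm_symm, he]
    exact hΨL y hy

omit [Module ℚ V] [Module ℚ W] in
lemma LatticeIsometric.of_prod_prod {b : V → V → ℚ} {c : W → W → ℚ} {L : Submodule ℤ W}
    (h : LatticeIsometric b (prodForm c (prodForm c c)) M (L.prod (L.prod L))) :
    LatticeIsometric b (fun x y => ∑ k, c (x k) (y k)) M
      (Submodule.pi Set.univ fun _ : Fin 3 => L) := by
  obtain ⟨f, hf⟩ := h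
  let e : (W × W × W) ≃ₗ[ℤ] (Fin 3 → W) :=
    { toFun := fun p => ![p.1, p.2.1, p.2.2]
      invFun := fun x => (x 0, x 1, x 2)
      map_add' := fun p q => by ext k; fin_cases k <;> rfl
      map_smul' := fun a p => by ext k; fin_cases k <;> rfl
      left_inv := fun p => rfl
      right_inv := fun x => by ext k; fin_cases k <;> rfl }
  have he : (L.prod (L.prod L)).map (e : (W × W × W) →ₗ[ℤ] (Fin 3 → W)) =
      Submodule.pi Set.univ fun _ : Fin 3 => L := by
    ext x
    rw [Submodule.mem_map_equiv]
    simp only [Submodule.mem_prod, Submodule.mem_pi, Set.mem_univ, true_imp_iff,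
      Fin.forall_fin_succ, Fin.forall_fin_zero, and_true]
    exact Iff.rfl
  refine ⟨f.trans (e.ofSubmodules _ _ he), fun x y => ?_⟩
  exact ((Fin.sum_univ_three _).trans (add_assoc _ _ _)).trans (hf x y)

end Lattices

section IntegerVectors

variable {ι : Type*} [Fintype ι]

/-- The coordinates at which an integer vector is odd, that is, its support modulo 2. -/
def oddSupport (x : ι → ℤ) : Finset ι := {i | Odd (x i)}

omit [Fintype ι] in
lemma even_sum_iff_even_card_odd (s : Finset ι) (f : ι → ℤ) :
    Even (∑ i ∈ s, f i) ↔ Even (Finset.card {i ∈ s | Odd (f i)}) := by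
  have : ((∑ i ∈ s, f i : ℤ) : ZMod 2) = (Finset.card {i ∈ s | Odd (f i)} : ℕ) := by
    rw [Finset.card_filter]
    push_cast
    refine Finset.sum_congr rfl fun i _ => ?_
    split_ifs with h
    · exact ZMod.intCast_eq_one_iff_odd.2 h
    · exact ZMod.intCast_eq_zero_iff_even.2 (Int.not_odd_iff_even.1 h)
  rw [← ZMod.intCast_eq_zero_iff_even, this, ZMod.natCast_eq_zero_iff_even]

lemma even_dotProduct_iff [DecidableEq ι] (x y : ι → ℤ) :
    Even (x ⬝ᵥ y) ↔ Even (oddSupport x ∩ oddSupport y).card := by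
  rw [dotProduct, even_sum_iff_even_card_odd]
  congr! 2
  ext i
  simp [oddSupport, Int.odd_mul]

lemma card_oddSupport_of_dotProduct_self_eq_two {x : ι → ℤ} (hx : x ⬝ᵥ x = 2) :
    (oddSupport x).card = 2 := by
  have hle : ∀ i, x i * x i ≤ 2 := fun i => hx ▸
    Finset.single_le_sum (f := fun i => x i * x i) (fun i _ => mul_self_nonneg _)
      (Finset.mem_univ i)
  have hsq : ∀ i, x i * x i = if Odd (x i) then 1 else 0 := by
    intro i
    have h₁ : x i ≤ 1 := by nlinarith [hle i]
    have h₂ : -1 ≤ x i := by nlinarith [hle i]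
    interval_cases x i <;> decide
  have : ((oddSupport x).card : ℤ) = x ⬝ᵥ x := by
    rw [oddSupport, Finset.card_filter, dotProduct]
    push_cast
    exact Finset.sum_congr rfl fun i _ => (hsq i).symm
  omega

lemma disjoint_oddSupport {x y : ι → ℤ} (hx : x ⬝ᵥ x = 2) (hy : y ⬝ᵥ y = 2) (hxy : x ⬝ᵥ y = 0)
    (hne : oddSupport x ≠ oddSupport y) : Disjoint (oddSupport x) (oddSupport y) := by
  classical
  have hcx := card_oddSupport_of_dotProduct_self_eq_two hx
  have hcy := card_oddSupport_of_dotProduct_self_eq_two hy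
  have heven : Even (oddSupport x ∩ oddSupport y).card := by
    rw [← even_dotProduct_iff, hxy]
    exact Even.zero
  have hle : (oddSupport x ∩ oddSupport y).card ≤ 2 :=
    hcx ▸ Finset.card_le_card Finset.inter_subset_left
  have hne2 : (oddSupport x ∩ oddSupport y).card ≠ 2 := fun h2 => hne <|
    (Finset.eq_of_subset_of_card_le Finset.inter_subset_left (by rw [h2, hcx])).symm.trans
      (Finset.eq_of_subset_of_card_le Finset.inter_subset_right (by rw [h2, hcy]))
  rw [Finset.disjoint_iff_inter_eq_empty, ← Finset.card_eq_zero]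
  obtain ⟨m, hm⟩ := heven
  omega

end IntegerVectors

/-- Root vectors `p i`, pairwise orthogonal and each pairing to `1` with a common root `c`; three
legs give a `D₄` diagram. The form `b` may take values in `ℤ` or in `ℚ`. -/
structure IsRootStar {M κ R : Type*} [Ring R] (b : M → M → R) (c : M) (p : κ → M) : Prop where
  center : b c c = 2
  leg : ∀ i, b (p i) (p i) = 2
  center_leg : ∀ i, b c (p i) = 1
  orthogonal : Pairwise fun i j => b (p i) (p j) = 0

-- Otherwise the legs have disjoint odd supports, each meeting that of the centre, which has two
-- elements.
lemma IsRootStar.exists_even_dotProduct_sub {ι κ : Type*} [Fintype ι] [Fintype κ]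
    {c : ι → ℤ} {p : κ → ι → ℤ} (h : IsRootStar dotProduct c p) (hκ : 2 < Fintype.card κ) :
    ∃ i j, i ≠ j ∧ ∀ x : ι → ℤ, Even (x ⬝ᵥ (p i - p j)) := by
  classical
  by_contra! hne
  have hdisj : ∀ i j, i ≠ j → Disjoint (oddSupport (p i)) (oddSupport (p j)) := by
    intro i j hij
    refine disjoint_oddSupport (h.leg i) (h.leg j) (h.orthogonal hij) fun heq => ?_
    obtain ⟨x, hx⟩ := hne i j hij
    rw [dotProduct_sub, Int.even_sub, even_dotProduct_iff, even_dotProduct_iff, heq] at hx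
    exact hx Iff.rfl
  have hpos : ∀ i, 1 ≤ (oddSupport c ∩ oddSupport (p i)).card := by
    intro i
    have hodd : ¬Even (oddSupport c ∩ oddSupport (p i)).card := by
      rw [← even_dotProduct_iff, h.center_leg i]
      decide
    exact Nat.one_le_iff_ne_zero.2 fun h0 => hodd (h0 ▸ Even.zero)
  refine hκ.not_ge ?_
  calc Fintype.card κ = ∑ _i : κ, 1 := by simp
    _ ≤ ∑ i, (oddSupport c ∩ oddSupport (p i)).card := Finset.sum_le_sum fun i _ => hpos i
    _ = (Finset.univ.biUnion fun i => oddSupport c ∩ oddSupport (p i)).card :=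
      (Finset.card_biUnion fun i _ j _ hij =>
        (hdisj i j hij).mono Finset.inter_subset_right Finset.inter_subset_right).symm
    _ ≤ (oddSupport c).card :=
      Finset.card_le_card (Finset.biUnion_subset.2 fun i _ => Finset.inter_subset_left)
    _ = 2 := card_oddSupport_of_dotProduct_self_eq_two h.center

section Realizability

variable {B : V →ₗ[ℚ] V →ₗ[ℚ] ℚ} {ι : Type*} [Fintype ι]

/-- The vectors of `S` can be replaced by integer vectors with the same pairings. The assignment
need not be additive: it only transports Gram matrices. -/
def IsIntegrallyRealizable (B : V →ₗ[ℚ] V →ₗ[ℚ] ℚ) (S : Set V) (ι : Type*) [Fintype ι] : Prop :=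
  ∃ φ : V → ι → ℤ, ∀ x ∈ S, ∀ y ∈ S, B x y = ((φ x ⬝ᵥ φ y : ℤ) : ℚ)

lemma IsIntegrallyRealizable.comap {C : W →ₗ[ℚ] W →ₗ[ℚ] ℚ} {S : Set V} {T : Set W}
    (hS : IsIntegrallyRealizable B S ι) (g : W → V) (hg : ∀ x y, B (g x) (g y) = C x y)
    (hgT : Set.MapsTo g T S) : IsIntegrallyRealizable C T ι := by
  obtain ⟨φ, hφ⟩ := hS
  exact ⟨φ ∘ g, fun x hx y hy => by rw [← hg, hφ _ (hgT hx) _ (hgT hy)]; rfl⟩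

lemma LatticeIsometric.isIntegrallyRealizable {κ : Type*} [Fintype κ] {n : ℕ}
    {R : Submodule ℤ V} {L : Submodule ℤ (κ → Fin n → ℚ)}
    (h : LatticeIsometric (fun x y => B x y) (fun x y => ∑ k, stdDot n (x k) (y k)) R L)
    (hL : ∀ x ∈ L, ∀ k, IsIntVec (x k)) : IsIntegrallyRealizable B R (κ × Fin n) := by
  classical
  obtain ⟨f, hf⟩ := h
  refine ⟨fun x q => if hx : x ∈ R then ⌊(f ⟨x, hx⟩ : κ → Fin n → ℚ) q.1 q.2⌋ else 0,
    fun x hx y hy => ?_⟩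
  have hfloor : ∀ z ∈ L, ∀ k i, ((⌊z k i⌋ : ℤ) : ℚ) = z k i := by
    intro z hz k i
    obtain ⟨m, hm⟩ := hL z hz k i
    rw [hm, Int.floor_intCast]
  refine (hf ⟨x, hx⟩ ⟨y, hy⟩).symm.trans ?_
  rw [SetLike.mem_coe] at hx hy
  simp [dotProduct, Fintype.sum_prod_type, stdDot, hx, hy, hfloor]

lemma IsRootStar.exists_even_pairing_of_isIntegrallyRealizable {κ : Type*} [Fintype κ]
    {S : Set V} {c : V} {p : κ → V} (h : IsRootStar (fun x y => B x y) c p)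
    (hκ : 2 < Fintype.card κ) (hS : IsIntegrallyRealizable B S ι) (hc : c ∈ S)
    (hp : ∀ i, p i ∈ S) : ∃ i j, i ≠ j ∧ ∀ x ∈ S, ∃ n : ℤ, B x (p i - p j) = 2 * n := by
  obtain ⟨φ, hφ⟩ := hS
  have hstar : IsRootStar dotProduct (φ c) fun i => φ (p i) :=
    { center := by exact_mod_cast (hφ c hc c hc).symm.trans h.center
      leg := fun i => by exact_mod_cast (hφ _ (hp i) _ (hp i)).symm.trans (h.leg i)
      center_leg := fun i => by exact_mod_cast (hφ c hc _ (hp i)).symm.trans (h.center_leg i)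
      orthogonal := fun i j hij => by
        exact_mod_cast (hφ _ (hp i) _ (hp j)).symm.trans (h.orthogonal hij) }
  obtain ⟨i, j, hij, heven⟩ := hstar.exists_even_dotProduct_sub hκ
  refine ⟨i, j, hij, fun x hx => ?_⟩
  obtain ⟨n, hn⟩ := (heven (φ x)).two_dvd
  refine ⟨n, ?_⟩
  rw [map_sub, hφ x hx _ (hp i), hφ x hx _ (hp j), ← Int.cast_sub, ← dotProduct_sub, hn]
  push_cast
  rfl

end Realizability

section OddPairing

variable {B : V →ₗ[ℚ] V →ₗ[ℚ] ℚ} {L : Submodule ℤ V} {u d w : V}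

lemma IsEvenLat.eq_zero_or_norm_eq_two (hB : IsPosDefSymm B) (hL : IsEvenLat B L) (hw : w ∈ L)
    (hww : B w w ≤ 2) : w = 0 ∨ B w w = 2 := by
  refine or_iff_not_imp_left.2 fun hw0 => ?_
  have hpos := hB.2 w hw0
  obtain ⟨n, hn⟩ := hL w hw
  rw [hn] at hpos hww ⊢
  have h₁ : (0 : ℤ) < 2 * n := by exact_mod_cast hpos
  have h₂ : (2 * n : ℤ) ≤ 2 := by exact_mod_cast hww
  have : n = 1 := by omega
  simp [this]

lemma IsPosDefSymm.eq_of_two_le (hB : IsPosDefSymm B) {x : V} (hxx : B x x ≤ 2)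
    (huu : B u u ≤ 2) (hxu : 2 ≤ B x u) : x = u := by
  by_contra hne
  have hpos := hB.2 (x - u) (sub_ne_zero.2 hne)
  simp only [map_sub, LinearMap.sub_apply, hB.1 u x] at hpos
  linarith

-- One of `x - y` and `x + y - u` has norm at most 2, and both are orthogonal to `u`.
lemma pairing_congr_of_pairing_eq_one (hB : IsPosDefSymm B) (hL : IsEvenLat B L) (hu : u ∈ L)
    (huu : B u u ≤ 2) (hdu : B d u = 0)
    (heven : ∀ w ∈ L, B w w ≤ 2 → B w u = 0 → ∃ n : ℤ, B w d = 2 * n) {x y : V}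
    (hx : x ∈ L) (hxx : B x x = 2) (hxu : B x u = 1) (hy : y ∈ L) (hyy : B y y = 2)
    (hyu : B y u = 1) {k : ℤ} (hyd : B y d = k) : ∃ n : ℤ, B x d = k + 2 * n := by
  obtain ⟨t, ht⟩ := hL.le_dualLattice hB hx y hy
  have huu' : B u u = 2 := (hL.eq_zero_or_norm_eq_two hB hu huu).resolve_left
    fun h => by simp [h] at hxu
  rcases le_or_gt 1 t with ht1 | ht0
  · have ht1' : (1 : ℚ) ≤ t := by exact_mod_cast ht1
    obtain ⟨n, hn⟩ := heven (x - y) (L.sub_mem hx hy)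
      (by simp only [map_sub, LinearMap.sub_apply, hxx, hyy, ht, hB.1 y x]; linarith)
      (by simp [hxu, hyu])
    exact ⟨n, by simp only [map_sub, LinearMap.sub_apply, hyd] at hn; linarith⟩
  · have ht0' : (t : ℚ) ≤ 0 := by exact_mod_cast Int.lt_add_one_iff.1 ht0
    obtain ⟨n, hn⟩ := heven (x + y - u) (L.sub_mem (L.add_mem hx hy) hu)
      (by
        simp only [map_sub, map_add, LinearMap.sub_apply, LinearMap.add_apply, hxx, hyy, ht, hxu,
          hyu, huu', hB.1 y x, hB.1 u x, hB.1 u y]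
        linarith)
      (by simp only [map_sub, map_add, LinearMap.sub_apply, LinearMap.add_apply, hxu, hyu, huu']
          norm_num)
    refine ⟨n - k, ?_⟩
    simp only [map_sub, map_add, LinearMap.sub_apply, LinearMap.add_apply, hyd, hB.1 u d,
      hdu] at hn
    push_cast
    linarith

lemma exists_even_pairing_sub_zsmul (hB : IsPosDefSymm B) (hL : IsEvenLat B L) (hu : u ∈ L)
    (huu : B u u ≤ 2) (hd : d ∈ L) (hdu : B d u = 0)
    (heven : ∀ x ∈ L, B x x ≤ 2 → B x u = 0 → ∃ n : ℤ, B x d = 2 * n) :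
    ∃ k : ℤ, ∀ x ∈ L, B x x = 2 → ∃ n : ℤ, B x (d - k • u) = 2 * n := by
  obtain ⟨k, hk⟩ : ∃ k : ℤ, ∀ x ∈ L, B x x = 2 → B x u = 1 → ∃ n : ℤ, B x d = k + 2 * n := by
    by_cases hy : ∃ y ∈ L, B y y = 2 ∧ B y u = 1
    · obtain ⟨y, hy, hyy, hyu⟩ := hy
      obtain ⟨k, hk⟩ := hL.le_dualLattice hB hy d hd
      exact ⟨k, fun x hx hxx hxu =>
        pairing_congr_of_pairing_eq_one hB hL hu huu hdu heven hx hxx hxu hy hyy hyu hk⟩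
    · exact ⟨0, fun x hx hxx hxu => absurd ⟨x, hx, hxx, hxu⟩ hy⟩
  refine ⟨k, fun x hx hxx => ?_⟩
  obtain ⟨m, hm⟩ := hL.le_dualLattice hB hx u hu
  wlog hm0 : 0 ≤ m generalizing x m
  · obtain ⟨n, hn⟩ := this (-x) (L.neg_mem hx) (by simpa using hxx) (-m) (by simp [hm]) (by omega)
    exact ⟨-n, by rw [map_neg, LinearMap.neg_apply] at hn; push_cast; linarith⟩
  obtain rfl | rfl | hm2 : m = 0 ∨ m = 1 ∨ 2 ≤ m := by omega
  · obtain ⟨n, hn⟩ := heven x hx hxx.le (by simpa using hm)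
    exact ⟨n, by simp [hm, hn]⟩
  · obtain ⟨n, hn⟩ := hk x hx hxx (by simpa using hm)
    exact ⟨n, by simp [hm, hn]⟩
  · obtain rfl : x = u := hB.eq_of_two_le hxx.le huu (hm ▸ by exact_mod_cast hm2)
    exact ⟨-k, by rw [map_sub, map_zsmul, hB.1, hdu, hxx, zsmul_eq_mul]; push_cast; ring⟩

lemma exists_root_odd_pairing (hB : IsPosDefSymm B) (hL : IsEvenLat B L)
    (hdual : dualLattice B (rootSublattice B L) ≤ L) (hu : u ∈ L) (huu : B u u ≤ 2) (hd : d ∈ L)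
    (hdd : B d d = 4) (hdu : B d u = 0) :
    ∃ x ∈ L, B x x = 2 ∧ B x u = 0 ∧ ∀ n : ℤ, B x d ≠ 2 * n := by
  by_contra! heven
  have heven' : ∀ w ∈ L, B w w ≤ 2 → B w u = 0 → ∃ n : ℤ, B w d = 2 * n := by
    intro w hw hww hwu
    obtain rfl | hww := hL.eq_zero_or_norm_eq_two hB hw hww
    · exact ⟨0, by simp⟩
    · exact heven w hw hww hwu
  obtain ⟨k, hk⟩ := exists_even_pairing_sub_zsmul hB hL hu huu hd hdu heven'
  have hz : (1 / 2 : ℚ) • (d - k • u) ∈ L := by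
    refine hdual (mem_dualLattice_rootSublattice fun x hx hxx => ?_)
    obtain ⟨n, hn⟩ := hk x hx hxx
    exact ⟨n, by rw [hB.1, map_smul, hn, smul_eq_mul]; ring⟩
  obtain ⟨n, hn⟩ := hL _ hz
  obtain ⟨e, he⟩ := hL u hu
  have hnorm : (4 + k ^ 2 * (2 * e) : ℤ) = 8 * n := by
    simp only [map_smul, map_sub, map_zsmul, LinearMap.smul_apply, LinearMap.sub_apply, smul_eq_mul,
      zsmul_eq_mul, hB.1 u d, hdu, hdd, he] at hn
    have : (4 + k ^ 2 * (2 * e) : ℚ) = 8 * n := by linarith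
    exact_mod_cast this
  have he0 : B u u = 0 ∨ B u u = 2 :=
    (hL.eq_zero_or_norm_eq_two hB hu huu).imp_left fun h => by simp [h]
  obtain rfl | rfl : e = 0 ∨ e = 1 := by
    rw [he] at he0
    exact_mod_cast (by simpa using he0 : (e : ℚ) = 0 ∨ (e : ℚ) = 1)
  · omega
  · obtain ⟨j, rfl | rfl⟩ := Int.even_or_odd' k <;> ring_nf at hnorm <;> omega

lemma IsRootStar.not_isIntegrallyRealizable {ι κ : Type*} [Fintype ι] [Fintype κ] {c : V}
    {p : κ → V} (hstar : IsRootStar (fun x y => B x y) c p) (hκ : 2 < Fintype.card κ)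
    (hB : IsPosDefSymm B) (hL : IsEvenLat B L) (hdual : dualLattice B (rootSublattice B L) ≤ L)
    (hu : u ∈ L) (huu : B u u ≤ 2) (hc : c ∈ L) (hcu : B c u = 0) (hp : ∀ i, p i ∈ L)
    (hpu : ∀ i, B (p i) u = 0) :
    ¬ IsIntegrallyRealizable B {x | x ∈ L ∧ B x x = 2 ∧ B x u = 0} ι := by
  intro hreal
  obtain ⟨i, j, hij, heven⟩ := hstar.exists_even_pairing_of_isIntegrallyRealizable hκ hreal
    ⟨hc, hstar.center, hcu⟩ fun i => ⟨hp i, hstar.leg i, hpu i⟩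
  have hij0 : B (p i) (p j) = 0 := hstar.orthogonal hij
  have hdd : B (p i - p j) (p i - p j) = 4 := by
    simp only [map_sub, LinearMap.sub_apply, hB.1 (p j) (p i), hij0, hstar.leg]
    norm_num
  obtain ⟨x, hx, hxx, hxu, hodd⟩ := exists_root_odd_pairing hB hL hdual hu huu
    (L.sub_mem (hp i) (hp j)) hdd (by simp [hpu])
  obtain ⟨n, hn⟩ := heven x ⟨hx, hxx, hxu⟩
  exact hodd n hn

end OddPairing

section E8

/-- The standard bilinear form on `ℚ^ι`. -/
abbrev dotForm (ι : Type*) [Fintype ι] : (ι → ℚ) →ₗ[ℚ] (ι → ℚ) →ₗ[ℚ] ℚ := dotProductBilin ℚ ℚ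

lemma isPosDefSymm_dotForm (ι : Type*) [Fintype ι] : IsPosDefSymm (dotForm ι) :=
  ⟨dotProduct_comm, fun x hx => (Finset.sum_nonneg fun i _ => mul_self_nonneg (x i)).lt_of_ne'
    (mt dotProduct_self_eq_zero.1 hx)⟩

lemma mem_latD_iff {n : ℕ} {x : Fin n → ℚ} :
    x ∈ latD n ↔ ∃ m : Fin n → ℤ, (fun i => (m i : ℚ)) = x ∧ Even (∑ i, m i) := by
  constructor
  · rintro ⟨hx, k, hk⟩
    choose m hm using hx
    refine ⟨m, funext fun i => (hm i).symm, even_iff_exists_two_mul.2 ⟨k, ?_⟩⟩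
    simp only [hm] at hk
    exact_mod_cast hk
  · rintro ⟨m, rfl, hm⟩
    obtain ⟨k, hk⟩ := even_iff_exists_two_mul.1 hm
    exact ⟨fun i => ⟨m i, rfl⟩, k, by beta_reduce; exact_mod_cast hk⟩

lemma isEvenLat_latD (n : ℕ) : IsEvenLat (dotForm (Fin n)) (latD n) := by
  intro x hx
  obtain ⟨m, rfl, hm⟩ := mem_latD_iff.1 hx
  have hsub : Even (∑ i, (m i * m i - m i)) := Finset.even_sum _ fun i _ => by
    rw [← mul_sub_one]
    exact Int.even_mul_pred_self (m i)
  rw [Finset.sum_sub_distrib, Int.even_sub] at hsub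
  obtain ⟨k, hk⟩ := even_iff_exists_two_mul.1 (hsub.2 hm)
  exact ⟨k, by simp only [dotProductBilin_apply_apply, dotProduct]; exact_mod_cast hk⟩

lemma single_add_single_mem_latD {n : ℕ} (i j : Fin n) (a b : ℤ) (hab : Even (a + b)) :
    (Pi.single i (a : ℚ) + Pi.single j (b : ℚ) : Fin n → ℚ) ∈ latD n := by
  refine mem_latD_iff.2 ⟨Pi.single i a + Pi.single j b, ?_, ?_⟩
  · ext k
    simp only [Pi.add_apply, Pi.single_apply]
    push_cast
    rfl
  · simpa [Finset.sum_add_distrib] using hab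

lemma mem_latE8_iff {x : Fin 8 → ℚ} :
    x ∈ latE8 ↔ x ∈ latD 8 ∨ x - (fun _ => 1 / 2) ∈ latD 8 := by
  have hone : (2 : ℤ) • (fun _ => 1 / 2 : Fin 8 → ℚ) ∈ latD 8 :=
    mem_latD_iff.2 ⟨fun _ => 1, by ext; norm_num, by decide⟩
  rw [latE8, Submodule.mem_sup]
  constructor
  · rintro ⟨y, hy, z, hz, rfl⟩
    obtain ⟨c, rfl⟩ := Submodule.mem_span_singleton.1 hz
    obtain ⟨k, rfl | rfl⟩ := Int.even_or_odd' c
    · left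
      rw [mul_comm, mul_smul]
      exact add_mem hy ((latD 8).smul_mem k hone)
    · right
      rw [add_smul, mul_comm, mul_smul, one_smul, ← add_assoc, add_sub_cancel_right]
      exact add_mem hy ((latD 8).smul_mem k hone)
  · rintro (hx | hx)
    · exact ⟨x, hx, 0, zero_mem _, add_zero x⟩
    · exact ⟨_, hx, _, Submodule.mem_span_singleton_self _, sub_add_cancel _ _⟩

lemma isEvenLat_latE8 : IsEvenLat (dotForm (Fin 8)) latE8 := by
  intro x hx
  obtain hx | hx := mem_latE8_iff.1 hx
  · exact isEvenLat_latD 8 x hx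
  · obtain ⟨k, hk⟩ := isEvenLat_latD 8 _ hx
    obtain ⟨-, l, hl⟩ := hx
    refine ⟨k + l + 1, ?_⟩
    simp only [dotProductBilin_apply_apply, dotProduct, Pi.sub_apply, Fin.sum_univ_eight] at hk hl ⊢
    push_cast
    linarith

lemma dualLattice_rootSublattice_latE8 :
    dualLattice (dotForm (Fin 8)) (rootSublattice (dotForm (Fin 8)) latE8) ≤ latE8 := by
  intro x hx
  have hroot : ∀ y ∈ latE8, y ⬝ᵥ y = 2 → ∃ n : ℤ, x ⬝ᵥ y = n := fun y hy hyy =>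
    hx y (Submodule.subset_span ⟨hy, hyy⟩)
  have hadd : ∀ i j, i ≠ j → ∃ n : ℤ, x i + x j = n := fun i j hij => by
    simpa using hroot _ (mem_latE8_iff.2 (.inl (single_add_single_mem_latD i j 1 1 (by decide))))
      (by norm_num [hij, hij.symm])
  have hsub : ∀ i j, i ≠ j → ∃ n : ℤ, x i - x j = n := fun i j hij => by
    simpa [sub_eq_add_neg] using
      hroot _ (mem_latE8_iff.2 (.inl (single_add_single_mem_latD i j 1 (-1) (by decide))))
        (by norm_num [hij, hij.symm])
  obtain ⟨s, hs⟩ := hroot (fun _ => 1 / 2) (mem_latE8_iff.2 (.inr (by simp)))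
    (by norm_num [dotProduct])
  replace hs : ∑ i, x i = 2 * s := by
    rw [← hs, dotProduct, ← Finset.sum_mul]
    ring
  obtain ⟨a, ha⟩ := hadd 0 1 (by decide)
  obtain ⟨b, hb⟩ := hsub 0 1 (by decide)
  have hdiff : ∀ i, ∃ n : ℤ, x i = x 0 + n := fun i => by
    obtain rfl | hi := eq_or_ne i 0
    · exact ⟨0, by simp⟩
    · obtain ⟨n, hn⟩ := hsub i 0 hi
      exact ⟨n, by linarith⟩
  refine mem_latE8_iff.2 ?_
  obtain ⟨k, hk | hk⟩ := Int.even_or_odd' (a + b)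
  · refine .inl ⟨fun i => ?_, s, hs⟩
    obtain ⟨n, hn⟩ := hdiff i
    have : (a + b : ℚ) = 2 * k := by exact_mod_cast hk
    exact ⟨k + n, by push_cast; linarith⟩
  · refine .inr ⟨fun i => ?_, s - 2, ?_⟩
    · obtain ⟨n, hn⟩ := hdiff i
      have : (a + b : ℚ) = 2 * k + 1 := by exact_mod_cast hk
      exact ⟨k + n, by push_cast [Pi.sub_apply]; linarith⟩
    · simp only [Pi.sub_apply, Finset.sum_sub_distrib, hs, Fin.sum_const, nsmul_eq_mul]
      push_cast
      ring

lemma span_latE8 : Submodule.span ℚ (latE8 : Set (Fin 8 → ℚ)) = ⊤ := by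
  refine eq_top_iff.2 fun x _ => ?_
  rw [← Finset.univ_sum_single x]
  refine sum_mem fun i _ => ?_
  have htwo : (Pi.single i 2 : Fin 8 → ℚ) ∈ latE8 := mem_latE8_iff.2 <| .inl <| by
    simpa using single_add_single_mem_latD i i 2 0 (by decide)
  have := Submodule.smul_mem _ (x i / 2) (Submodule.subset_span (R := ℚ) htwo)
  simpa [← Pi.single_smul] using this

lemma span_pi_eq_top {κ : Type*} [Finite κ] {L : Submodule ℤ W}
    (hL : Submodule.span ℚ (L : Set W) = ⊤) :
    Submodule.span ℚ (↑(Submodule.pi Set.univ fun _ : κ => L) : Set (κ → W)) = ⊤ := by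
  classical
  cases nonempty_fintype κ
  refine eq_top_iff.2 fun x _ => ?_
  rw [← Finset.univ_sum_single x]
  refine sum_mem fun k _ => ?_
  have hspan : x k ∈ Submodule.span ℚ (L : Set W) := hL ▸ Submodule.mem_top
  exact (Submodule.map_span_le (LinearMap.single ℚ (fun _ : κ => W) k) (L : Set W) _).2
    (fun y hy => Submodule.subset_span (Submodule.le_comap_single_pi (fun _ => L) hy))
    ⟨x k, hspan, rfl⟩

end E8

section Stars

variable {u : Fin 8 → ℚ}

/-- A star of `E₈` roots with three legs, orthogonal to `u`. -/
def HasOrthogonalRootStar (u : Fin 8 → ℚ) : Prop :=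
  ∃ (c : Fin 8 → ℚ) (p : Fin 3 → Fin 8 → ℚ), IsRootStar (fun x y => dotForm (Fin 8) x y) c p ∧
    (c ∈ latE8 ∧ c ⬝ᵥ u = 0) ∧ ∀ i, p i ∈ latE8 ∧ p i ⬝ᵥ u = 0

lemma exists_embedding_zeros (hu : u ∈ latD 8) (huu : u ⬝ᵥ u ≤ 2) :
    ∃ f : Fin 4 ↪ Fin 8, ∀ i, u (f i) = 0 := by
  obtain ⟨m, rfl, -⟩ := mem_latD_iff.1 hu
  have hm : ∑ i, m i * m i ≤ 2 := by
    simp only [dotProduct] at huu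
    exact_mod_cast huu
  have hnz : (Finset.card {i | ¬m i = 0} : ℤ) ≤ ∑ i, m i * m i := by
    rw [Finset.card_filter]
    push_cast
    refine Finset.sum_le_sum fun i _ => ?_
    split_ifs with hi
    · exact mul_self_nonneg _
    · exact Int.add_one_le_of_lt (mul_self_pos.2 hi)
  have hz := Finset.card_filter_add_card_filter_not (s := Finset.univ) fun i => m i = 0
  have hz4 : 4 ≤ Fintype.card {i // m i = 0} := by
    rw [Fintype.card_subtype]
    simp only [Finset.card_univ, Fintype.card_fin] at hz
    omega
  obtain ⟨f⟩ := Function.Embedding.nonempty_of_card_le (α := Fin 4) (by simpa using hz4)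
  exact ⟨f.trans (.subtype _), fun i => by simp [(f i).2]⟩

lemma hasOrthogonalRootStar_of_zeros (f : Fin 4 ↪ Fin 8) (hf : ∀ i, u (f i) = 0) :
    HasOrthogonalRootStar u := by
  let e : Fin 4 → Fin 8 → ℚ := fun i => Pi.single (f i) 1
  have he : ∀ i j, e i ⬝ᵥ e j = if i = j then 1 else 0 := fun i j => by
    simp [e, Pi.single_apply, eq_comm]
  have heu : ∀ i, e i ⬝ᵥ u = 0 := fun i => by simp [e, hf]
  have hadd : ∀ i j, e i + e j ∈ latE8 := fun i j => mem_latE8_iff.2 <| .inl <| by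
    simpa using single_add_single_mem_latD (f i) (f j) 1 1 (by decide)
  have hsub : ∀ i j, e i - e j ∈ latE8 := fun i j => mem_latE8_iff.2 <| .inl <| by
    simpa [e, sub_eq_add_neg, Pi.single_neg] using
      single_add_single_mem_latD (f i) (f j) 1 (-1) (by decide)
  refine ⟨e 0 + e 1, ![e 0 + e 2, e 0 - e 2, e 1 + e 3], ⟨?_, ?_, ?_, ?_⟩, ⟨hadd 0 1, ?_⟩, ?_⟩
  · norm_num [he]
  · intro i; fin_cases i <;> simp [he] <;> norm_num
  · intro i; fin_cases i <;> simp [he]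
  · intro i j hij; fin_cases i <;> fin_cases j <;> simp [he] at hij ⊢
  · simp [heu]
  · simp [Fin.forall_fin_succ, hadd, hsub, heu]

lemma exists_eq_add_half (hu : u - (fun _ => 1 / 2) ∈ latD 8) :
    ∃ m : Fin 8 → ℤ, ∀ i, u i = m i + 1 / 2 := by
  obtain ⟨m, hm, -⟩ := mem_latD_iff.1 hu
  exact ⟨m, fun i => sub_eq_iff_eq_add.1 (congrFun hm i).symm⟩

lemma mul_self_eq_of_half {m : Fin 8 → ℤ} (hm : ∀ i, u i = m i + 1 / 2) (huu : u ⬝ᵥ u ≤ 2)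
    (i : Fin 8) : u i * u i = 1 / 4 := by
  have hge : ∀ i, 0 ≤ u i * u i - 1 / 4 := fun i => by
    have : (0 : ℚ) ≤ m i * (m i + 1) := by
      exact_mod_cast (by obtain h | h := le_or_gt 0 (m i) <;> nlinarith : 0 ≤ m i * (m i + 1))
    rw [hm]
    linarith
  have hsum : ∑ i, (u i * u i - 1 / 4) = 0 := by
    refine le_antisymm ?_ (Finset.sum_nonneg fun i _ => hge i)
    rw [Finset.sum_sub_distrib]
    rw [dotProduct] at huu
    norm_num [huu]
  exact sub_eq_zero.1 ((Finset.sum_eq_zero_iff_of_nonneg fun i _ => hge i).1 hsum i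
    (Finset.mem_univ i))

lemma dotProduct_mul_of_mul_self_eq {ι : Type*} [Fintype ι] {u : ι → ℚ}
    (hu : ∀ i, u i * u i = 1 / 4) (s t : ι → ℤ) :
    (fun i => s i * u i) ⬝ᵥ (fun i => t i * u i) = (s ⬝ᵥ t : ℤ) / 4 := by
  push_cast [dotProduct, Finset.sum_div]
  refine Finset.sum_congr rfl fun i _ => ?_
  rw [mul_mul_mul_comm, hu]
  ring

lemma two_mul_mul_mem_latE8 {m : Fin 8 → ℤ} (hm : ∀ i, u i = m i + 1 / 2) {t : Fin 8 → ℤ}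
    (ht : Even (∑ i, t i)) : (fun i => ((2 * t) i : ℤ) * u i) ∈ latE8 := by
  refine mem_latE8_iff.2 (.inl (mem_latD_iff.2 ⟨fun i => t i * (2 * m i + 1), ?_, ?_⟩))
  · ext i
    push_cast [hm, Pi.mul_apply, Pi.ofNat_apply]
    ring
  · simp only [mul_add, mul_one, Finset.sum_add_distrib]
    exact (Finset.even_sum _ fun i _ => ((even_two_mul _).mul_left _)).add ht

-- The coordinates of `u` are `±1/2`, so multiplying them by integer vectors realizes, up to the
-- factor `1/4`, the dot products of `ℤ⁸`.
lemma hasOrthogonalRootStar_of_half (hu : u - (fun _ => 1 / 2) ∈ latD 8) (huu : u ⬝ᵥ u ≤ 2) :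
    HasOrthogonalRootStar u := by
  obtain ⟨m, hm⟩ := exists_eq_add_half hu
  let r : (Fin 8 → ℤ) → Fin 8 → ℚ := fun s i => s i * u i
  have hr : ∀ s t n, s ⬝ᵥ t = n → r s ⬝ᵥ r t = n / 4 := fun s t n hst =>
    hst ▸ dotProduct_mul_of_mul_self_eq (mul_self_eq_of_half hm huu) s t
  have hru : ∀ s, s ⬝ᵥ 1 = 0 → r s ⬝ᵥ u = 0 := fun s hs => by
    simpa [r] using hr s 1 0 hs
  have hmem : ∀ t : Fin 8 → ℤ, Even (∑ i, t i) → r (2 * t) ∈ latE8 := fun t ht =>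
    two_mul_mul_mem_latE8 hm ht
  have hmem' : r ![1, -1, 1, -1, 1, -1, 1, -1] ∈ latE8 := by
    convert latE8.sub_mem (mem_latE8_iff.2 (.inr hu))
      (hmem ![0, 1, 0, 1, 0, 1, 0, 1] (by decide)) using 1
    ext i
    fin_cases i <;> simp [r] <;> ring
  let c : Fin 8 → ℤ := 2 * ![1, -1, 0, 0, 0, 0, 0, 0]
  let p : Fin 3 → Fin 8 → ℤ := ![2 * ![1, 0, -1, 0, 0, 0, 0, 0], 2 * ![0, -1, 0, 1, 0, 0, 0, 0],
    ![1, -1, 1, -1, 1, -1, 1, -1]]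
  have hleg : ∀ i, p i ⬝ᵥ p i = 8 := by decide
  have hcenter_leg : ∀ i, c ⬝ᵥ p i = 4 := by decide
  have horth : ∀ i j, i ≠ j → p i ⬝ᵥ p j = 0 := by decide
  have hpu : ∀ i, p i ⬝ᵥ 1 = 0 := by decide
  refine ⟨r c, fun i => r (p i), ⟨?_, fun i => ?_, fun i => ?_, fun i j hij => ?_⟩,
    ⟨hmem _ (by decide), hru _ (by decide)⟩, fun i => ⟨?_, hru _ (hpu i)⟩⟩
  · exact (hr c c 8 (by decide)).trans (by norm_num)
  · exact (hr _ _ 8 (hleg i)).trans (by norm_num)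
  · exact (hr _ _ 4 (hcenter_leg i)).trans (by norm_num)
  · exact (hr _ _ 0 (horth i j hij)).trans (by norm_num)
  · fin_cases i
    exacts [hmem _ (by decide), hmem _ (by decide), hmem']

lemma not_isIntegrallyRealizable_orthogonal_roots_latE8 {ι : Type*} [Fintype ι] (hu : u ∈ latE8)
    (huu : u ⬝ᵥ u ≤ 2) :
    ¬ IsIntegrallyRealizable (dotForm (Fin 8)) {z | z ∈ latE8 ∧ z ⬝ᵥ z = 2 ∧ z ⬝ᵥ u = 0} ι := by
  have hstar : HasOrthogonalRootStar u := by
    obtain hu | hu := mem_latE8_iff.1 hu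
    · obtain ⟨f, hf⟩ := exists_embedding_zeros hu huu
      exact hasOrthogonalRootStar_of_zeros f hf
    · exact hasOrthogonalRootStar_of_half hu huu
  obtain ⟨c, p, hcp, ⟨hc, hcu⟩, hp⟩ := hstar
  exact hcp.not_isIntegrallyRealizable (by simp) (isPosDefSymm_dotForm _) isEvenLat_latE8
    dualLattice_rootSublattice_latE8 hu huu hc hcu (fun i => (hp i).1) fun i => (hp i).2

end Stars

section E8Splitting

variable {κ : Type*} [Fintype κ] {B : V →ₗ[ℚ] V →ₗ[ℚ] ℚ} {N E E' : Submodule ℤ V}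
  {Φ : V ≃ₗ[ℚ] (κ → Fin 8 → ℚ)} {v x y : V}

/-- The orthogonal sum of copies of the standard form on `ℚ^ι`, indexed by `κ`. -/
def blockForm (κ ι : Type*) [Fintype κ] [Fintype ι] :
    (κ → ι → ℚ) →ₗ[ℚ] (κ → ι → ℚ) →ₗ[ℚ] ℚ :=
  ∑ k, (dotForm ι).compl₁₂ (LinearMap.proj k) (LinearMap.proj k)

lemma blockForm_apply {ι : Type*} [Fintype ι] (x y : κ → ι → ℚ) :
    blockForm κ ι x y = ∑ k, x k ⬝ᵥ y k := by
  simp [blockForm, LinearMap.sum_apply]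

lemma isPosDefSymm_blockForm (κ ι : Type*) [Fintype κ] [Fintype ι] :
    IsPosDefSymm (blockForm κ ι) := by
  refine ⟨fun x y => ?_, fun x hx => ?_⟩
  · simp only [blockForm_apply, dotProduct_comm]
  · obtain ⟨k, hk⟩ := Function.ne_iff.1 hx
    rw [blockForm_apply]
    exact Finset.sum_pos' (fun l _ => (isPosDefSymm_dotForm ι).nonneg (x l))
      ⟨k, Finset.mem_univ k, (isPosDefSymm_dotForm ι).2 _ hk⟩

/-- Coordinates identifying `E` with the orthogonal sum of copies of `E₈` indexed by `κ`. -/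
structure IsE8Splitting (B : V →ₗ[ℚ] V →ₗ[ℚ] ℚ) (E : Submodule ℤ V)
    (Φ : V ≃ₗ[ℚ] (κ → Fin 8 → ℚ)) : Prop where
  form_eq : ∀ x y, B x y = ∑ k, Φ x k ⬝ᵥ Φ y k
  mem_iff : ∀ x, x ∈ E ↔ ∀ k, Φ x k ∈ latE8

lemma exists_isE8Splitting (hB : IsPosDefSymm B) (hE : E ≤ dualLattice B E)
    (hdim : Module.finrank ℚ V = 8 * Fintype.card κ) (hκ : 0 < Fintype.card κ)
    (h : LatticeIsometric (fun x y => B x y) (fun x y => ∑ k, stdDot 8 (x k) (y k))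
      (rootSublattice B E) (Submodule.pi Set.univ fun _ : κ => latE8)) :
    ∃ Φ : V ≃ₗ[ℚ] (κ → Fin 8 → ℚ), IsE8Splitting B E Φ := by
  classical
  have : FiniteDimensional ℚ V := Module.finite_of_finrank_pos (by omega)
  have h' : LatticeIsometric (fun x y => B x y) (fun x y => blockForm κ (Fin 8) x y)
      (rootSublattice B E) (Submodule.pi Set.univ fun _ : κ => latE8) := by
    simp only [blockForm_apply]
    exact h
  obtain ⟨Φ, hΦ, hΦL⟩ := h'.exists_linearEquiv hB (isPosDefSymm_blockForm κ (Fin 8))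
    (span_pi_eq_top span_latE8) (by simp [Module.finrank_pi_fintype, hdim, mul_comm])
  have hform : ∀ x y, B x y = ∑ k, Φ x k ⬝ᵥ Φ y k := fun x y => by rw [← hΦ, blockForm_apply]
  refine ⟨Φ, hform, fun x => ⟨fun hx k => ?_, fun hx => ?_⟩⟩
  · refine dualLattice_rootSublattice_latE8 (dualLattice_anti rootSublattice_le fun z hz => ?_)
    have hz' : Pi.single k z ∈ Submodule.pi Set.univ fun _ : κ => latE8 :=
      Submodule.le_comap_single_pi (fun _ => latE8) hz
    obtain ⟨n, hn⟩ := hE hx _ (rootSublattice_le (hΦL _ hz'))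
    refine ⟨n, hn ▸ ?_⟩
    rw [hform, Finset.sum_eq_single k (by simp +contextual) (by simp)]
    simp
  · simpa using rootSublattice_le (hΦL (Φ x) fun k _ => hx k)

namespace IsE8Splitting

lemma symm_single_mem [DecidableEq κ] (h : IsE8Splitting B E Φ) {z : Fin 8 → ℚ} (hz : z ∈ latE8)
    (k : κ) : Φ.symm (Pi.single k z) ∈ E := by
  rw [h.mem_iff, Φ.apply_symm_apply]
  exact fun l =>
    Submodule.le_comap_single_pi (I := Set.univ) (i := k) (fun _ => latE8) hz l trivial

lemma pairing_symm_single [DecidableEq κ] (h : IsE8Splitting B E Φ) (x : V) (k : κ)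
    (z : Fin 8 → ℚ) : B x (Φ.symm (Pi.single k z)) = Φ x k ⬝ᵥ z := by
  rw [h.form_eq, Φ.apply_symm_apply, Finset.sum_eq_single k (by simp +contextual) (by simp)]
  simp

-- If the block `u / 2` were shorter, every root of the block orthogonal to `u` would pair
-- integrally with the odd vector `v`, hence lie in `N`, hence in the other neighbour `E'`.
lemma one_le_dotProduct_self_of_odd (h : IsE8Splitting B E Φ) (hB : IsPosDefSymm B)
    (hN : N ≤ dualLattice B N) (hE : IsEvenLat B E) (hEdual : dualLattice B E ≤ E)
    (hNE : Neighbors N E) (hE' : IsEvenLat B E') (hNE' : Neighbors N E') {ι : Type*} [Fintype ι]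
    (hreal : IsIntegrallyRealizable B (rootSublattice B E' : Set V) ι) (hv : v ∈ N) {n : ℤ}
    (hvv : B v v = 2 * n + 1) (k : κ) : 1 ≤ Φ v k ⬝ᵥ Φ v k := by
  classical
  have hu : Φ v k + Φ v k ∈ latE8 := by
    simpa using (h.mem_iff _).1 (hNE.1.add_self_mem hv).2 k
  obtain ⟨m, hm⟩ := isEvenLat_latE8 _ hu
  by_contra! hlt
  have huu : (Φ v k + Φ v k) ⬝ᵥ (Φ v k + Φ v k) ≤ 2 := by
    simp only [dotProductBilin_apply_apply, add_dotProduct, dotProduct_add] at hm ⊢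
    have hm2 : m < 2 := by
      have : (m : ℚ) < 2 := by linarith
      exact_mod_cast this
    have hm1 : (m : ℚ) ≤ 1 := by exact_mod_cast Int.lt_add_one_iff.1 hm2
    linarith
  refine not_isIntegrallyRealizable_orthogonal_roots_latE8 hu huu
    (hreal.comap (fun z => Φ.symm (Pi.single k z)) (fun z w => ?_) ?_)
  · rw [h.pairing_symm_single]
    simp
  · rintro z ⟨hz, hzz, hzu⟩
    have hvz : B v (Φ.symm (Pi.single k z)) = 0 := by
      rw [dotProduct_comm, add_dotProduct] at hzu
      rw [h.pairing_symm_single]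
      linarith
    have hnorm : B (Φ.symm (Pi.single k z)) (Φ.symm (Pi.single k z)) = 2 := by
      rw [h.pairing_symm_single]
      simpa using hzz
    have hzN := hNE.mem_of_pairing_int hEdual hN hv (hE.notMem_of_odd hvv)
      (h.symm_single_mem hz k) ⟨0, by simpa using hvz⟩
    exact Submodule.subset_span
      ⟨hNE'.mem_of_even hE' hN hB hv hvv hzN (n := 1) (by simpa using hnorm), hnorm⟩

lemma exists_int_dotProduct_eq (h : IsE8Splitting B E Φ) (hE : IsEvenLat B E)
    (hNE : Neighbors N E) (hx : x ∈ N) (hy : y ∈ N) {m n : ℤ} (hxx : B x x = 2 * m + 1)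
    (hyy : B y y = 2 * n + 1) {k : κ} (hxk : Φ x k ⬝ᵥ Φ x k = 1) (hyk : Φ y k ⬝ᵥ Φ y k = 1) :
    ∃ t : ℤ, Φ x k ⬝ᵥ Φ y k = t := by
  have hsub : x - y ∈ N ⊓ E := hNE.1.sub_mem hx hy (fun h => hE.notMem_of_odd hxx h.2)
    fun h => hE.notMem_of_odd hyy h.2
  obtain ⟨t, ht⟩ := isEvenLat_latE8 _ ((h.mem_iff _).1 hsub.2 k)
  refine ⟨1 - t, ?_⟩
  simp only [map_sub, Pi.sub_apply, LinearMap.sub_apply, dotProductBilin_apply_apply, hxk, hyk,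
    dotProduct_comm (Φ y k) (Φ x k)] at ht
  push_cast
  linarith

lemma exists_block_of_norm_eq_two (h : IsE8Splitting B E Φ) (hx : x ∈ E) (hxx : B x x = 2) :
    ∃ j, Φ x j ⬝ᵥ Φ x j = 2 ∧ ∀ k, k ≠ j → Φ x k = 0 := by
  classical
  have hsum : ∑ k, Φ x k ⬝ᵥ Φ x k = 2 := h.form_eq x x ▸ hxx
  have hnonneg : ∀ k, 0 ≤ Φ x k ⬝ᵥ Φ x k := fun k => (isPosDefSymm_dotForm _).nonneg (Φ x k)
  have hblock : ∀ k, Φ x k = 0 ∨ Φ x k ⬝ᵥ Φ x k = 2 := fun k =>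
    isEvenLat_latE8.eq_zero_or_norm_eq_two (isPosDefSymm_dotForm _) ((h.mem_iff x).1 hx k)
      (hsum ▸ Finset.single_le_sum (f := fun k => Φ x k ⬝ᵥ Φ x k)
        (fun k _ => hnonneg k) (Finset.mem_univ k))
  obtain ⟨j, hj⟩ : ∃ j, Φ x j ≠ 0 := by
    by_contra! h0
    simp [h0] at hsum
  have hjj := (hblock j).resolve_left hj
  refine ⟨j, hjj, fun k hk => dotProduct_self_eq_zero.1 ?_⟩
  rw [← Finset.add_sum_erase _ _ (Finset.mem_univ j), hjj, add_eq_left] at hsum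
  exact (Finset.sum_eq_zero_iff_of_nonneg fun k _ => hnonneg k).1 hsum k (by simp [hk])

end IsE8Splitting

end E8Splitting

section UnitBlocks

variable {B : V →ₗ[ℚ] V →ₗ[ℚ] ℚ} {h x y : V}

lemma pairing_eq_zero_of_ne (hB : IsPosDefSymm B) (hhh : B h h = 2) (hxx : B x x = 1)
    (hyy : B y y = 1) (hhx : B h x = 1) (hhy : B h y = 1) (hxy : ∃ t : ℤ, B x y = t)
    (hne : x ≠ y) : B x y = 0 := by
  obtain ⟨t, ht⟩ := hxy
  have hlt := hB.2 (x - y) (sub_ne_zero.2 hne)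
  have hge := hB.nonneg (h - x - y)
  simp only [map_sub, LinearMap.sub_apply, hB.1 y x, hB.1 x h, hB.1 y h, hhh, hxx, hyy, hhx, hhy,
    ht] at hlt hge
  have ht1 : t < 1 := by
    have : (t : ℚ) < 1 := by linarith
    exact_mod_cast this
  have ht0 : 0 ≤ t := by
    have : (0 : ℚ) ≤ t := by linarith
    exact_mod_cast this
  obtain rfl : t = 0 := by omega
  simpa using ht

-- Bessel's inequality: orthonormal vectors pairing to `1` with `h` number at most `B h h`.
lemma card_le_two_of_pairing_eq_one (hB : IsPosDefSymm B) (hhh : B h h = 2) {s : Finset V}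
    (hs : ∀ x ∈ s, B x x = 1) (hhs : ∀ x ∈ s, B h x = 1)
    (hint : ∀ x ∈ s, ∀ y ∈ s, ∃ t : ℤ, B x y = t) : s.card ≤ 2 := by
  by_contra! hcard
  obtain ⟨x, hx, y, hy, z, hz, hxy, hxz, hyz⟩ := Finset.two_lt_card.1 hcard
  have horth : ∀ v ∈ s, ∀ w ∈ s, v ≠ w → B v w = 0 := fun v hv w hw =>
    pairing_eq_zero_of_ne hB hhh (hs v hv) (hs w hw) (hhs v hv) (hhs w hw) (hint v hv w hw)
  have hge := hB.nonneg (h - x - y - z)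
  simp only [map_sub, LinearMap.sub_apply, hB.1 _ h, hhh, hs x hx, hs y hy, hs z hz,
    hhs x hx, hhs y hy, hhs z hz, horth x hx y hy hxy, horth x hx z hz hxz, horth y hy z hz hyz,
    horth y hy x hx hxy.symm, horth z hz x hx hxz.symm, horth z hz y hy hyz.symm] at hge
  norm_num at hge

variable {κ ι τ : Type*} [Fintype κ] [Fintype ι] {a : τ → κ → ι → ℚ} {j : κ}

-- The sum has norm `(card κ)²`, and the block at `j` already accounts for all of it.
lemma sum_block_eq_zero (hunit : ∀ i k, a i k ⬝ᵥ a i k = 1)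
    (horth : Pairwise fun i i' => ∑ k, a i k ⬝ᵥ a i' k = 0) {s : Finset τ}
    (hs : s.card = Fintype.card κ) {z : ι → ℚ} (hj : ∀ i ∈ s, a i j = z) {k : κ} (hk : k ≠ j) :
    ∑ i ∈ s, a i k = 0 := by
  classical
  obtain rfl | ⟨i₀, hi₀⟩ := s.eq_empty_or_nonempty
  · simp
  have htotal : ∑ k, (∑ i ∈ s, a i k) ⬝ᵥ (∑ i ∈ s, a i k) = s.card * s.card :=
    calc ∑ k, (∑ i ∈ s, a i k) ⬝ᵥ (∑ i ∈ s, a i k)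
        = ∑ i ∈ s, ∑ i' ∈ s, ∑ k, a i' k ⬝ᵥ a i k := by
          simp only [sum_dotProduct, dotProduct_sum]
          rw [Finset.sum_comm]
          exact Finset.sum_congr rfl fun i _ => Finset.sum_comm
      _ = ∑ i ∈ s, ∑ k, a i k ⬝ᵥ a i k := Finset.sum_congr rfl fun i hi =>
          Finset.sum_eq_single_of_mem i hi fun i' _ hne => horth hne
      _ = s.card * s.card := by simp [hunit, hs]
  have hblock : (∑ i ∈ s, a i j) ⬝ᵥ (∑ i ∈ s, a i j) = s.card * s.card := by
    have hzz : z ⬝ᵥ z = 1 := hj i₀ hi₀ ▸ hunit i₀ j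
    rw [Finset.sum_congr rfl hj]
    simp [hzz, ← Nat.cast_smul_eq_nsmul ℚ]
  rw [← Finset.add_sum_erase _ _ (Finset.mem_univ j), hblock, add_eq_left] at htotal
  exact dotProduct_self_eq_zero.1 <| (Finset.sum_eq_zero_iff_of_nonneg fun k _ =>
    (isPosDefSymm_dotForm ι).nonneg (∑ i ∈ s, a i k)).1 htotal k (by simp [hk])

lemma add_add_ne_zero_of_int_dotProduct {x y z : ι → ℚ} (hxx : x ⬝ᵥ x = 1) (hyy : y ⬝ᵥ y = 1)
    (hzz : z ⬝ᵥ z = 1) (hxy : ∃ t : ℤ, x ⬝ᵥ y = t) : x + y + z ≠ 0 := by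
  intro hsum
  obtain ⟨t, ht⟩ := hxy
  rw [eq_neg_of_add_eq_zero_right hsum, neg_dotProduct_neg] at hzz
  simp only [add_dotProduct, dotProduct_add, hxx, hyy, ht, dotProduct_comm y x] at hzz
  have : 2 + 2 * t = 1 := by
    have : (2 + 2 * t : ℚ) = 1 := by linarith
    exact_mod_cast this
  omega

lemma card_le_four_of_unit_blocks [Fintype τ] (hκ : Fintype.card κ = 3) {h : ι → ℚ}
    (hhh : h ⬝ᵥ h = 2) (hha : ∀ i, h ⬝ᵥ a i j = 1) (hunit : ∀ i k, a i k ⬝ᵥ a i k = 1)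
    (hint : ∀ i i' k, ∃ t : ℤ, a i k ⬝ᵥ a i' k = t)
    (horth : Pairwise fun i i' => ∑ k, a i k ⬝ᵥ a i' k = 0) : Fintype.card τ ≤ 4 := by
  classical
  by_contra! hτ
  have himage : (Finset.univ.image fun i => a i j).card ≤ 2 := by
    refine card_le_two_of_pairing_eq_one (isPosDefSymm_dotForm ι) hhh ?_ ?_ ?_
    · simpa using fun i => hunit i j
    · simpa using hha
    · simpa using fun i i' => hint i i' j
  obtain ⟨z, -, hz⟩ := Finset.exists_lt_card_fiber_of_mul_lt_card_of_maps_to (n := 2)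
    (fun i (_ : i ∈ Finset.univ) => Finset.mem_image_of_mem (fun i => a i j) (Finset.mem_univ i))
    (by rw [Finset.card_univ]; omega)
  obtain ⟨s, hs, hs3⟩ := Finset.exists_subset_card_eq (Nat.succ_le_of_lt hz)
  obtain ⟨k, hk⟩ := Fintype.exists_ne_of_one_lt_card (by omega : 1 < Fintype.card κ) j
  have hsum := sum_block_eq_zero hunit horth (hs3.trans hκ.symm)
    (fun i hi => (Finset.mem_filter.1 (hs hi)).2) hk
  obtain ⟨p, q, r, hpq, hpr, hqr, rfl⟩ := Finset.card_eq_three.1 hs3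
  rw [Finset.sum_insert (by simp [hpq, hpr]), Finset.sum_pair hqr, ← add_assoc] at hsum
  exact add_add_ne_zero_of_int_dotProduct (hunit p k) (hunit q k) (hunit r k) (hint p q k) hsum

end UnitBlocks

theorem stmt5_general {B : V →ₗ[ℚ] V →ₗ[ℚ] ℚ} {N E₁ E₂ : Submodule ℤ V} {ι : Type*} [Fintype ι]
    (hB : IsPosDefSymm B) (hdim : Module.finrank ℚ V = 24) (hN : N ≤ dualLattice B N)
    (hunimod₁ : IsUnimodular B E₁) (hE₁ : IsEvenLat B E₁) (hNE₁ : Neighbors N E₁)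
    (hr₁ : LatticeIsometric (fun x y => B x y)
      (prodForm (stdDot 8) (prodForm (stdDot 8) (stdDot 8)))
      (rootSublattice B E₁) (latE8.prod (latE8.prod latE8)))
    (hE₂ : IsEvenLat B E₂) (hNE₂ : Neighbors N E₂)
    (hreal : IsIntegrallyRealizable B (rootSublattice B E₂ : Set V) ι) :
    ¬ ContainsLPlus B N := by
  rintro ⟨h, hhN, a, ha, hhh, hha, haa, horth⟩
  have hodd : ∀ i, B (a i) (a i) = 2 * (1 : ℤ) + 1 := fun i => (haa i).trans (by norm_num)
  obtain ⟨Φ, hΦ⟩ := exists_isE8Splitting (κ := Fin 3) hB hunimod₁.le (by simpa using hdim)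
    (by simp) hr₁.of_prod_prod
  have hunit : ∀ i k, Φ (a i) k ⬝ᵥ Φ (a i) k = 1 := by
    intro i
    have hge := fun k => hΦ.one_le_dotProduct_self_of_odd hB hN hE₁ hunimod₁.ge hNE₁ hE₂ hNE₂ hreal
      (ha i) (hodd i) k
    have hsum : ∑ k, Φ (a i) k ⬝ᵥ Φ (a i) k = ∑ _k : Fin 3, 1 := by
      rw [← hΦ.form_eq, haa]
      norm_num
    exact fun k =>
      ((Finset.sum_eq_sum_iff_of_le fun k _ => hge k).1 hsum.symm k (Finset.mem_univ k)).symm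
  have hhE₁ : h ∈ E₁ :=
    hNE₁.mem_of_even hE₁ hN hB (ha 0) (hodd 0) hhN (n := 1) (by simpa using hhh)
  obtain ⟨j, hj, hj0⟩ := hΦ.exists_block_of_norm_eq_two hhE₁ hhh
  have hblock : ∀ i, Φ h j ⬝ᵥ Φ (a i) j = 1 := fun i => by
    rw [← hha i, hΦ.form_eq, Finset.sum_eq_single j (fun k _ hk => by simp [hj0 k hk]) (by simp)]
  have hcard := card_le_four_of_unit_blocks (a := fun i => Φ (a i)) (by simp) hj hblock hunit
    (fun i i' k => hΦ.exists_int_dotProduct_eq hE₁ hNE₁ (ha i) (ha i') (hodd i) (hodd i')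
      (hunit i k) (hunit i' k))
    fun i i' hne => (hΦ.form_eq _ _).symm.trans (horth i i' hne)
  simp at hcard

/-- An odd Niemeier lattice of minimum norm 2 whose two even neighbors have root
sublattices isometric to `E₈⊕E₈⊕E₈` and `D₈⊕D₈⊕D₈` respectively does not contain `L⁺`. -/
theorem stmt5 {V : Type*} [AddCommGroup V] [Module ℚ V]
    (B : V →ₗ[ℚ] V →ₗ[ℚ] ℚ) (hB : IsPosDefSymm B)
    (N : Submodule ℤ V) (hN : IsOddNiemeier B N)
    (hmin : HasMinNorm B N 2)
    (E₁ E₂ : Submodule ℤ V) (hne : E₁ ≠ E₂)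
    (hE₁ : IsEvenNeighbor B N E₁) (hE₂ : IsEvenNeighbor B N E₂)
    (hr₁ : LatticeIsometric (fun x y => B x y)
      (prodForm (stdDot 8) (prodForm (stdDot 8) (stdDot 8)))
      (rootSublattice B E₁) (latE8.prod (latE8.prod latE8)))
    (hr₂ : LatticeIsometric (fun x y => B x y)
      (prodForm (stdDot 8) (prodForm (stdDot 8) (stdDot 8)))
      (rootSublattice B E₂) ((latD 8).prod ((latD 8).prod (latD 8)))) :
    ¬ ContainsLPlus B N :=
  stmt5_general hB hN.2.2.2 hN.1.integral hE₁.2.1 hE₁.2.2.1 hE₁.2.2.2 hr₁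
    hE₂.2.2.1 hE₂.2.2.2 (hr₂.of_prod_prod.isIntegrallyRealizable fun _ hx k => (hx k trivial).1)

end Niemeier
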